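/- Let F be a field with char F ≠ 2, and let A be a finite-dimensional unital associative F-algebra equipped with an F-linear involution *, such that A is semisimple as a ring. Let a ∈ A satisfy a* = a and suppose a is not a unit (a zero divisor). Suppose further there is no proper *-symmetric idempotent commuting with a, i.e., every e ∈ A with e*e = e, e* = e and e*a = a*e satisfies e = 0 or e = 1. Then (1) a is nilpotent, and (2) A is *-simple: every two-sided ideal I of A with I* = I satisfies I = 0 or I = A. -/

import Mathlib

open Polynomial in
/-- Polynomials in a self-adjoint element are self-adjoint when the involution is linear. -/
theorem star_aeval_of_star_eq {F A : Type*} [CommRing F] [StarRing F] [TrivialStar F]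
    [Ring A] [Algebra F A] [StarRing A] [StarModule F A] {a : A} (ha : star a = a) (p : F[X]) :
    star (aeval a p) = aeval a p := by
  induction p using Polynomial.induction_on' with
  | add p q hp hq => rw [map_add, star_add, hp, hq]
  | monomial n c =>
    rw [aeval_monomial, ← Algebra.smul_def, star_smul, star_pow, ha, star_trivial]

open Polynomial in
/-- Fitting's lemma for one element of a finite-dimensional algebra: some polynomial in `a` is an
idempotent `e` such that `a` is a unit if `e = 1` and nilpotent if `e = 0`. -/
theorem exists_isIdempotentElem_aeval {F A : Type*} [Field F] [Ring A] [Algebra F A]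
    [FiniteDimensional F A] (a : A) :
    ∃ p : F[X], IsIdempotentElem (aeval a p) ∧ (aeval a p = 1 → IsUnit a) ∧
      (aeval a p = 0 → ∃ k : ℕ, 1 ≤ k ∧ a ^ k = 0) := by
  have hmin : minpoly F a ≠ 0 := minpoly.ne_zero (Algebra.IsIntegral.isIntegral a)
  obtain ⟨q, hq, hdvd⟩ := exists_eq_pow_rootMultiplicity_mul_and_not_dvd _ hmin 0
  rw [C_0, sub_zero] at hq hdvd
  set k := rootMultiplicity 0 (minpoly F a)
  obtain ⟨u, v, huv⟩ : IsCoprime (X ^ (k + 1)) q :=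
    ((irreducible_X.coprime_iff_not_dvd).2 hdvd).pow_left
  have hzero : aeval a (X ^ (k + 1) * q) = 0 := by
    rw [pow_succ', mul_assoc, ← hq, map_mul, minpoly.aeval, mul_zero]
  refine ⟨u * X ^ (k + 1), ?_, fun h => ?_, fun h => ⟨k + 1, by omega, ?_⟩⟩
  · have hpoly : u * X ^ (k + 1) * (u * X ^ (k + 1)) =
        u * X ^ (k + 1) - u * v * (X ^ (k + 1) * q) := by
      linear_combination (u * X ^ (k + 1)) * huv
    rw [IsIdempotentElem, ← map_mul, hpoly, map_sub, map_mul _ (u * v), hzero, mul_zero, sub_zero]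
  · refine isUnit_iff_exists.2 ⟨aeval a (u * X ^ k), ?_, ?_⟩
    · rw [← h, show u * X ^ (k + 1) = X * (u * X ^ k) by ring, map_mul _ X, aeval_X]
    · rw [← h, show u * X ^ (k + 1) = u * X ^ k * X by ring, map_mul _ _ X, aeval_X]
  · have hpoly : X ^ (k + 1) = X ^ (k + 1) * (u * X ^ (k + 1)) + v * (X ^ (k + 1) * q) := by
      linear_combination (-X ^ (k + 1)) * huv
    have := congrArg (aeval a) hpoly
    rwa [map_add, map_mul _ _ (u * _), h, map_mul _ v, hzero, mul_zero, mul_zero, add_zero,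
      map_pow, aeval_X] at this

/-- Every two-sided ideal of a semisimple ring contains a right identity for itself. -/
theorem TwoSidedIdeal.exists_right_identity {A : Type*} [Ring A] [IsSemisimpleRing A]
    (I : TwoSidedIdeal A) : ∃ e ∈ I, ∀ x ∈ I, x * e = x := by
  obtain ⟨J, hJ⟩ := exists_isCompl (TwoSidedIdeal.asIdeal I)
  obtain ⟨e, he, f, hf, hef⟩ := Submodule.mem_sup.1
    (hJ.sup_eq_top ▸ Submodule.mem_top (x := (1 : A)))
  rw [TwoSidedIdeal.mem_asIdeal] at he
  refine ⟨e, he, fun x hx => ?_⟩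
  have hxf : x * f = x - x * e := by rw [eq_sub_of_add_eq' hef, mul_sub, mul_one]
  have hmem : x * f ∈ TwoSidedIdeal.asIdeal I := by
    rw [hxf, TwoSidedIdeal.mem_asIdeal]
    exact I.sub_mem hx (I.mul_mem_left _ _ he)
  have hxf_zero := Submodule.disjoint_def.1 hJ.disjoint _ hmem (J.mul_mem_left x hf)
  exact (sub_eq_zero.1 (hxf.symm.trans hxf_zero)).symm

/-- A star-stable two-sided ideal of a semisimple ring is generated by a self-adjoint central
idempotent. -/
theorem TwoSidedIdeal.exists_central_idempotent_of_star_mem {A : Type*} [Ring A] [StarRing A]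
    [IsSemisimpleRing A] (I : TwoSidedIdeal A) (hI : ∀ x ∈ I, star x ∈ I) :
    ∃ e ∈ I, e * e = e ∧ star e = e ∧ (∀ y, e * y = y * e) ∧ ∀ x ∈ I, x * e = x := by
  obtain ⟨e, he, hright⟩ := I.exists_right_identity
  have hleft : ∀ x ∈ I, star e * x = x := fun x hx => by
    simpa using congrArg star (hright _ (hI x hx))
  have hstar : star e = e := (hright _ (hI e he)).symm.trans (hleft e he)
  rw [hstar] at hleft
  refine ⟨e, he, hright e he, hstar, fun y => ?_, hright⟩
  rw [← hright _ (I.mul_mem_right e y he), mul_assoc, hleft _ (I.mul_mem_left y e he)]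

/-- In a finite-dimensional semisimple *-algebra over a field of
characteristic ≠ 2, if a *-symmetric zero divisor a commutes with no proper
*-symmetric idempotent, then a is nilpotent and the algebra is *-simple. -/
theorem stmt_10 {F A : Type*} [Field F] [StarRing F] [TrivialStar F]
    (h2 : (2 : F) ≠ 0)
    [Ring A] [Algebra F A] [StarRing A] [StarModule F A]
    [FiniteDimensional F A] [IsSemisimpleRing A]
    (a : A) (ha : star a = a) (hna : ¬ IsUnit a)
    (hidem : ∀ e : A, e * e = e → star e = e → e * a = a * e → e = 0 ∨ e = 1) :
    (∃ k : ℕ, 1 ≤ k ∧ a ^ k = 0) ∧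
      (∀ I : TwoSidedIdeal A, (∀ x ∈ I, star x ∈ I) → I = ⊥ ∨ I = ⊤) := by
  constructor
  · obtain ⟨p, hp, hunit, hnil⟩ := exists_isIdempotentElem_aeval (F := F) a
    have hcomm : Commute (Polynomial.aeval a p) a := by
      simpa using (Polynomial.commute_X p).symm.map (Polynomial.aeval a)
    exact (hidem _ hp (star_aeval_of_star_eq ha p) hcomm).elim hnil fun h => absurd (hunit h) hna
  · intro I hI
    obtain ⟨e, he, hee, hstar, hcentral, hright⟩ := I.exists_central_idempotent_of_star_mem hI
    refine (hidem e hee hstar (hcentral a)).imp (fun h => ?_) fun h => ?_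
    · refine eq_bot_iff.2 fun x hx => ?_
      rw [TwoSidedIdeal.mem_bot, ← hright x hx, h, mul_zero]
    · exact I.one_mem_iff.1 (h ▸ he)
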